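/- arXiv:math/0405143 — 7 statements merged into one kernel-verified Lean document; each statement's English description precedes it below -/
import Mathlib

section
/- Let p ≥ 2 be a natural number. For n ≥ 1 set a_n^(p) = (p^n - 1)/(p - 1). Then every positive integer k can be written in exactly one way in the form k = t_1·a_{n_1}^(p) + t_2·a_{n_2}^(p) + ... + t_l·a_{n_l}^(p), where l ≥ 1, the exponents satisfy n_1 > n_2 > ... > n_l > 0, the coefficients satisfy 1 ≤ t_j ≤ p - 1 for all j = 1, ..., l-1, and 1 ≤ t_l ≤ p. -/
/-- A representation of `k` in base-`p` "repunit" form: a nonempty list of pairs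
`(t, n)` with strictly decreasing positive exponents `n`, all digits `t` except
possibly the last in `[1, p-1]`, the last digit in `[1, p]`, and
`k = Σ t * (p^n - 1)/(p - 1)`. -/
def IsRepunitRep (p k : ℕ) (L : List (ℕ × ℕ)) : Prop :=
  L ≠ [] ∧
  L.Chain' (fun a b => a.2 > b.2) ∧
  (∀ x ∈ L, 0 < x.2) ∧
  (∀ x ∈ L.dropLast, 1 ≤ x.1 ∧ x.1 ≤ p - 1) ∧
  (∀ x, L.getLast? = some x → 1 ≤ x.1 ∧ x.1 ≤ p) ∧
  (L.map (fun x => x.1 * ((p ^ x.2 - 1) / (p - 1)))).sum = k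

/-- The repunit `(p^n - 1)/(p - 1)`. -/
def repu (p n : ℕ) : ℕ := (p ^ n - 1) / (p - 1)

lemma repu_zero (p : ℕ) : repu p 0 = 0 := by simp [repu]

lemma repu_succ (p : ℕ) (hp : 2 ≤ p) (n : ℕ) : repu p (n + 1) = p * repu p n + 1 := by
  have h : ∀ m, repu p m = ∑ i ∈ Finset.range m, p ^ i := fun m => (Nat.geomSum_eq hp m).symm
  rw [h, h, Finset.sum_range_succ', Finset.mul_sum]
  simp [pow_succ, mul_comm]

lemma repu_strictMono (p : ℕ) (hp : 2 ≤ p) : StrictMono (repu p) := by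
  apply strictMono_nat_of_lt_succ
  intro n
  rw [repu_succ p hp]
  nlinarith

lemma rep_single (p k : ℕ) (x : ℕ × ℕ) :
    IsRepunitRep p k [x] ↔ 0 < x.2 ∧ 1 ≤ x.1 ∧ x.1 ≤ p ∧ x.1 * repu p x.2 = k := by
  simp [IsRepunitRep, repu, and_assoc]
  intros
  exact List.isChain_singleton x

lemma rep_cons (p k : ℕ) (x y : ℕ × ℕ) (L : List (ℕ × ℕ)) :
    IsRepunitRep p k (x :: y :: L) ↔ y.2 < x.2 ∧ 1 ≤ x.1 ∧ x.1 ≤ p - 1 ∧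
      ∃ k', IsRepunitRep p k' (y :: L) ∧ x.1 * repu p x.2 + k' = k := by
  constructor
  · rintro ⟨-, h2, h3, h4, h5, h6⟩
    have h2' := List.isChain_cons_cons.1 h2
    have h4' := h4 x (by simp)
    refine ⟨h2'.1, h4'.1, h4'.2, _, ⟨by simp, h2'.2, fun z hz => h3 z (List.mem_cons_of_mem _ hz),
      fun z hz => h4 z ?_, fun z hz => h5 z ?_, rfl⟩, ?_⟩
    · rw [List.dropLast_cons_cons]; exact List.mem_cons_of_mem _ hz
    · rw [List.getLast?_cons_cons]; exact hz
    · rw [← h6, List.map_cons (a := x), List.sum_cons]; rfl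
  · rintro ⟨h1, h2, h3, k', ⟨-, g2, g3, g4, g5, g6⟩, h⟩
    refine ⟨by simp, List.isChain_cons_cons.2 ⟨h1, g2⟩, ?_, ?_, ?_, ?_⟩
    · intro z hz
      rcases List.mem_cons.1 hz with rfl | hz
      · omega
      · exact g3 z hz
    · intro z hz
      rw [List.dropLast_cons_cons] at hz
      rcases List.mem_cons.1 hz with rfl | hz
      · exact ⟨h2, h3⟩
      · exact g4 z hz
    · intro z hz
      rw [List.getLast?_cons_cons] at hz
      exact g5 z hz
    · rw [← h, ← g6, List.map_cons (a := x), List.sum_cons]; rfl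

lemma rep_bounds (p : ℕ) (hp : 2 ≤ p) (L : List (ℕ × ℕ)) : ∀ (k : ℕ) (x : ℕ × ℕ),
    IsRepunitRep p k (x :: L) → 0 < x.2 ∧ repu p x.2 ≤ k ∧ k < repu p (x.2 + 1) ∧
      (L ≠ [] → x.1 * repu p x.2 < k ∧ k < (x.1 + 1) * repu p x.2) := by
  induction L with
  | nil =>
    intro k x h
    obtain ⟨h1, h2, h3, h4⟩ := (rep_single p k x).1 h
    rw [repu_succ p hp]
    refine ⟨h1, by nlinarith, by nlinarith, by simp⟩
  | cons y L ih =>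
    intro k x h
    obtain ⟨h1, h2, h3, k', hk', rfl⟩ := (rep_cons p k x y L).1 h
    obtain ⟨g0, g1, g2, -⟩ := ih k' y hk'
    have hy : repu p 0 < repu p y.2 := repu_strictMono p hp g0
    have hx : repu p (y.2 + 1) ≤ repu p x.2 := (repu_strictMono p hp).monotone h1
    have h3' : x.1 + 1 ≤ p := by omega
    have := Nat.mul_le_mul_right (repu p x.2) h3'
    rw [repu_succ p hp x.2]
    refine ⟨by omega, by nlinarith, by nlinarith, fun _ => ⟨by omega, by nlinarith⟩⟩

lemma rep_unique (p : ℕ) (hp : 2 ≤ p) (L : List (ℕ × ℕ)) : ∀ (k : ℕ) (M : List (ℕ × ℕ)),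
    IsRepunitRep p k L → IsRepunitRep p k M → L = M := by
  induction L with
  | nil => intro k M h; exact absurd rfl h.1
  | cons x L ih =>
    intro k M hL hM
    cases M with
    | nil => exact absurd rfl hM.1
    | cons y M =>
      obtain ⟨a0, a1, a2, a3⟩ := rep_bounds p hp L k x hL
      obtain ⟨b0, b1, b2, b3⟩ := rep_bounds p hp M k y hM
      have e1 := (repu_strictMono p hp).lt_iff_lt.1 (lt_of_le_of_lt a1 b2)
      have e2 := (repu_strictMono p hp).lt_iff_lt.1 (lt_of_le_of_lt b1 a2)
      obtain ⟨t, n⟩ := x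
      obtain ⟨s, m⟩ := y
      obtain rfl : n = m := by simp only at e1 e2; omega
      have hpos : repu p 0 < repu p n := repu_strictMono p hp a0
      simp only at *
      cases L with
      | nil =>
        obtain ⟨-, -, -, c⟩ := (rep_single p k _).1 hL
        cases M with
        | nil =>
          obtain ⟨-, -, -, d⟩ := (rep_single p k _).1 hM
          simp only at c d
          have : t = s := Nat.eq_of_mul_eq_mul_right (by omega) (c.trans d.symm)
          rw [this]
        | cons z M =>
          obtain ⟨b4, b5⟩ := b3 (by simp)
          simp only at c
          rw [← c] at b4 b5
          have := Nat.lt_of_mul_lt_mul_right b4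
          have := Nat.lt_of_mul_lt_mul_right b5
          omega
      | cons w L =>
        obtain ⟨a4, a5⟩ := a3 (by simp)
        cases M with
        | nil =>
          obtain ⟨-, -, -, d⟩ := (rep_single p k _).1 hM
          simp only at d
          rw [← d] at a4 a5
          have := Nat.lt_of_mul_lt_mul_right a4
          have := Nat.lt_of_mul_lt_mul_right a5
          omega
        | cons z M =>
          obtain ⟨b4, b5⟩ := b3 (by simp)
          have := Nat.lt_of_mul_lt_mul_right (a4.trans b5)
          have := Nat.lt_of_mul_lt_mul_right (b4.trans a5)
          obtain rfl : t = s := by omega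
          obtain ⟨-, -, -, k1, c, c'⟩ := (rep_cons p k _ _ _).1 hL
          obtain ⟨-, -, -, k2, d, d'⟩ := (rep_cons p k _ _ _).1 hM
          obtain rfl : k1 = k2 := by omega
          rw [ih k1 _ c d]

lemma rep_exists (p : ℕ) (hp : 2 ≤ p) (k : ℕ) : 0 < k → ∃ L, IsRepunitRep p k L := by
  induction k using Nat.strong_induction_on with
  | _ k ih =>
    intro hk
    have hmono := repu_strictMono p hp
    obtain ⟨n, hn0, hn1, hn2⟩ : ∃ n, 0 < n ∧ repu p n ≤ k ∧ k < repu p (n + 1) := by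
      have hex : ∃ m, k < repu p m := ⟨k + 1, hmono.le_apply⟩
      have hs := Nat.find_spec hex
      have hm : ∀ m, m < Nat.find hex → ¬ k < repu p m := fun m => Nat.find_min hex
      have h1 : repu p 1 = 1 := by rw [repu_succ p hp, repu_zero, mul_zero]
      generalize Nat.find hex = N at hs hm
      match N, hs, hm with
      | 0, hs, _ => rw [repu_zero] at hs; omega
      | 1, hs, _ => omega
      | n + 2, hs, hm => exact ⟨n + 1, by omega, not_lt.1 (hm _ (by omega)), hs⟩
    have hpos : repu p 0 < repu p n := hmono hn0
    rw [repu_succ p hp] at hn2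
    have hdm := Nat.div_add_mod' k (repu p n)
    have hlt := Nat.mod_lt k (show 0 < repu p n by omega)
    have ht1 : 1 ≤ k / repu p n := Nat.div_pos hn1 (by omega)
    generalize k / repu p n = t at *
    generalize k % repu p n = r at *
    rcases Nat.eq_zero_or_pos r with h0 | h0
    · refine ⟨[(t, n)], (rep_single _ _ _).2 ⟨hn0, ht1, ?_, by simp only; omega⟩⟩
      have : t * repu p n ≤ p * repu p n := by omega
      exact Nat.le_of_mul_le_mul_right this (by omega)
    · have htp : t < p := by
        have : t * repu p n < p * repu p n := by omega
        exact Nat.lt_of_mul_lt_mul_right this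
      obtain ⟨L, hL⟩ := ih r (by omega) h0
      cases L with
      | nil => exact absurd rfl hL.1
      | cons y L =>
        obtain ⟨-, b, -⟩ := rep_bounds p hp L r y hL
        exact ⟨(t, n) :: y :: L, (rep_cons _ _ _ _ _).2
          ⟨hmono.lt_iff_lt.1 (lt_of_le_of_lt b hlt), ht1, by simp only; omega, r, hL, hdm⟩⟩

theorem unique_repunit_representation (p : ℕ) (hp : 2 ≤ p) (k : ℕ) (hk : 0 < k) :
    ∃! L : List (ℕ × ℕ), IsRepunitRep p k L := by
  obtain ⟨L, hL⟩ := rep_exists p hp k hk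
  exact ⟨L, hL, fun M hM => rep_unique p hp M k L hM hL⟩
end

section
/- Let p be a prime, let l ≥ 1, let n_1 > n_2 > ... > n_l > 0 be natural numbers, and let t_1, ..., t_l be natural numbers with 1 ≤ t_j ≤ p - 1 for j = 1, ..., l-1 and 1 ≤ t_l ≤ p. Set k = Σ_{i=1}^{l} t_i·(p^{n_i} - 1)/(p - 1) and z = Σ_{i=1}^{l} t_i·p^{n_i}. Then p^k divides z! (the factorial of z). -/
theorem pow_dvd_factorial_of_repunit_rep (p : ℕ) (hp : p.Prime) (l : ℕ)
    (n t : Fin (l + 1) → ℕ) (hanti : StrictAnti n) (hnpos : ∀ i, 0 < n i)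
    (ht : ∀ i : Fin (l + 1), i ≠ Fin.last l → 1 ≤ t i ∧ t i ≤ p - 1)
    (htl : 1 ≤ t (Fin.last l) ∧ t (Fin.last l) ≤ p) :
    p ^ (∑ i, t i * ((p ^ n i - 1) / (p - 1))) ∣
      Nat.factorial (∑ i, t i * p ^ n i) := by
  have key : ∀ m : ℕ, p ^ ((p ^ m - 1) / (p - 1)) ∣ Nat.factorial (p ^ m) := by
    intro m
    rw [← Nat.geomSum_eq hp.two_le m]
    induction m with
    | zero => simp
    | succ k ih =>
      rw [pow_dvd_iff_le_emultiplicity] at ih ⊢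
      rw [pow_succ' p k, hp.emultiplicity_factorial_mul, Finset.sum_range_succ]
      push_cast at ih ⊢
      gcongr
  refine dvd_trans ?_ (Nat.prod_factorial_dvd_factorial_sum Finset.univ (fun i => t i * p ^ n i))
  rw [← Finset.prod_pow_eq_pow_sum]
  refine Finset.prod_dvd_prod_of_dvd _ _ fun i _ => ?_
  have h := Nat.prod_factorial_dvd_factorial_sum (Finset.range (t i)) (fun _ => p ^ n i)
  simp only [Finset.prod_const, Finset.sum_const, Finset.card_range, smul_eq_mul] at h
  refine dvd_trans ?_ h
  rw [mul_comm, pow_mul]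
  exact pow_dvd_pow_of_dvd (key _) _
end

section
/- Let p be a prime, let l ≥ 1, let n_1 > n_2 > ... > n_l > 0 be natural numbers, and let t_1, ..., t_l be natural numbers with 1 ≤ t_j ≤ p - 1 for j = 1, ..., l-1 and 1 ≤ t_l ≤ p. Set k = Σ_{i=1}^{l} t_i·(p^{n_i} - 1)/(p - 1) and z = Σ_{i=1}^{l} t_i·p^{n_i}. Then p^k does not divide (z - 1)!. -/
theorem digsum_step (p m : ℕ) (hp : 1 < p) :
    (p.digits m).sum = m % p + (p.digits (m / p)).sum := by
  rcases Nat.eq_zero_or_pos m with rfl | h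
  · simp
  · rw [Nat.digits_def' hp h]; simp

theorem digsum_add (p a : ℕ) (hp : 1 < p) (n : ℕ) : ∀ b, b < p ^ n →
    (p.digits (a * p ^ n + b)).sum = (p.digits a).sum + (p.digits b).sum := by
  induction n with
  | zero => intro b hb; have : b = 0 := by simpa using hb
            subst this; simp
  | succ n ih =>
    intro b hb
    have e : a * p ^ (n + 1) + b = b + p * (a * p ^ n) := by ring
    have hb2 : b / p < p ^ n := Nat.div_lt_of_lt_mul (by rw [pow_succ] at hb; linarith)
    rw [digsum_step p _ hp, e, Nat.add_mul_mod_self_left, Nat.add_mul_div_left _ _ (by omega),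
      add_comm (b / p), ih _ hb2, digsum_step p b hp]
    omega

theorem digsum_small (p a : ℕ) (ha : a < p) : (p.digits a).sum = a := by
  rcases Nat.eq_zero_or_pos a with rfl | h
  · simp
  · rw [Nat.digits_of_lt p a (by omega) ha]; simp

theorem digsum_main (p : ℕ) (hp : 1 < p) (l : ℕ) :
    ∀ (n t : Fin (l + 1) → ℕ) (_ : StrictAnti n) (_ : ∀ i, 0 < n i)
    (_ : ∀ i : Fin (l + 1), i ≠ Fin.last l → 1 ≤ t i ∧ t i ≤ p - 1)
    (_ : 1 ≤ t (Fin.last l) ∧ t (Fin.last l) ≤ p),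
    1 ≤ ∑ i, t i * p ^ n i ∧ ∑ i, t i * p ^ n i ≤ p ^ (n 0 + 1) ∧
    ∑ i, t i ≤ (p.digits ((∑ i, t i * p ^ n i) - 1)).sum := by
  induction l with
  | zero =>
    intro n t hn hpos ht htl
    simp only [Nat.reduceAdd, Fin.last_zero, Fin.isValue, Finset.univ_unique, Fin.default_eq_zero,
      Finset.sum_singleton, zero_add] at *
    have h1 : 1 < p ^ n 0 := Nat.one_lt_pow (hpos 0).ne' hp
    refine ⟨Nat.mul_pos htl.1 (by omega), ?_, ?_⟩
    · rw [pow_succ, mul_comm]; exact Nat.mul_le_mul_left _ htl.2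
    · obtain ⟨s, hs⟩ : ∃ s, t 0 = s + 1 := ⟨t 0 - 1, by omega⟩
      have e : t 0 * p ^ n 0 - 1 = s * p ^ n 0 + (p ^ n 0 - 1) := by
        rw [hs, add_mul]; omega
      rw [e, digsum_add p s hp _ _ (by omega), digsum_small p s (by omega), hs]
      have : (p.digits (p ^ n 0 - 1)).sum ≠ 0 := by
        intro h0
        have := Nat.getLast_digit_ne_zero p (m := p ^ n 0 - 1) (by omega)
        rw [List.sum_eq_zero_iff] at h0
        exact this (h0 _ (List.getLast_mem _))
      omega
  | succ l ih =>
    intro n t hn hpos ht htl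
    obtain ⟨h1, h2, h3⟩ := ih (fun i => n i.succ) (fun i => t i.succ)
      (fun i j h => hn (Fin.succ_lt_succ_iff.2 h)) (fun i => hpos _)
      (fun i hi => ht _ (by rw [← Fin.succ_last]; exact fun h => hi (Fin.succ_injective _ h)))
      (by simpa using htl)
    rw [Fin.sum_univ_succ, Fin.sum_univ_succ (f := t)]
    set z := ∑ i : Fin (l + 1), t i.succ * p ^ n i.succ
    have h0 := ht 0 (by simp [Fin.ext_iff])
    have hlt : n (Fin.succ 0) < n 0 := hn (Fin.succ_pos 0)
    have hz : z ≤ p ^ n 0 := h2.trans (Nat.pow_le_pow_right (by omega) hlt)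
    refine ⟨by omega, ?_, ?_⟩
    · have h4 : (t 0 + 1) * p ^ n 0 ≤ p * p ^ n 0 := Nat.mul_le_mul_right _ (by omega)
      rw [pow_succ, mul_comm (p ^ n 0) p]
      linarith
    · rw [Nat.add_sub_assoc h1, digsum_add p _ hp _ _ (by omega), digsum_small p _ (by omega)]
      omega

theorem pow_not_dvd_factorial_pred_of_repunit_rep (p : ℕ) (hp : p.Prime) (l : ℕ)
    (n t : Fin (l + 1) → ℕ) (hanti : StrictAnti n) (hnpos : ∀ i, 0 < n i)
    (ht : ∀ i : Fin (l + 1), i ≠ Fin.last l → 1 ≤ t i ∧ t i ≤ p - 1)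
    (htl : 1 ≤ t (Fin.last l) ∧ t (Fin.last l) ≤ p) :
    ¬ p ^ (∑ i, t i * ((p ^ n i - 1) / (p - 1))) ∣
      Nat.factorial ((∑ i, t i * p ^ n i) - 1) := by
  obtain ⟨h1, -, h3⟩ := digsum_main p hp.one_lt l n t hanti hnpos ht htl
  haveI : Fact p.Prime := ⟨hp⟩
  intro h
  rw [padicValNat_dvd_iff_le (Nat.factorial_ne_zero _)] at h
  have h4 := Nat.mul_le_mul_left (p - 1) h
  rw [sub_one_mul_padicValNat_factorial] at h4
  have h5 : (p - 1) * (∑ i, t i * ((p ^ n i - 1) / (p - 1))) + ∑ i, t i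
      = ∑ i, t i * p ^ n i := by
    rw [Finset.mul_sum, ← Finset.sum_add_distrib]
    refine Finset.sum_congr rfl fun i _ => ?_
    have hd : (p - 1) * ((p ^ n i - 1) / (p - 1)) = p ^ n i - 1 :=
      Nat.mul_div_cancel' (by simpa using Nat.sub_dvd_pow_sub_pow p 1 (n i))
    have hpp : 1 ≤ p ^ n i := Nat.one_le_pow _ _ hp.pos
    rw [mul_left_comm, hd, ← Nat.mul_succ]
    congr 1; omega
  have h6 : 1 ≤ ∑ i, t i := htl.1.trans
    (Finset.single_le_sum (f := t) (fun i _ => Nat.zero_le _) (Finset.mem_univ (Fin.last l)))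
  have h7 := Nat.digit_sum_le p ((∑ i, t i * p ^ n i) - 1)
  omega
end

section
/- Let p be a prime, let l ≥ 1, let n_1 > n_2 > ... > n_l > 0 be natural numbers, and let t_1, ..., t_l be natural numbers with 1 ≤ t_j ≤ p - 1 for j = 1, ..., l-1 and 1 ≤ t_l ≤ p. Set k = Σ_{i=1}^{l} t_i·(p^{n_i} - 1)/(p - 1). Then the smallest natural number m such that p^k divides m! is exactly z = Σ_{i=1}^{l} t_i·p^{n_i}; that is, p^k ∣ z! and for every m < z, p^k does not divide m!. -/
open Nat in
theorem aux_val (p : ℕ) [hp : Fact p.Prime] (a : ℕ) (ha : a < p) (n : ℕ) :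
    ∀ r, r < p ^ n → padicValNat p (a * p ^ n + r).factorial =
      a * (∑ i ∈ Finset.range n, p ^ i) + padicValNat p r.factorial := by
  have hp0 : 0 < p := hp.out.pos
  have key : ∀ m, padicValNat p m.factorial = padicValNat p (m / p).factorial + m / p := by
    intro m
    rw [← padicValNat_mul_div_factorial, padicValNat_factorial_mul]
  induction n with
  | zero =>
    intro r hr
    have : r = 0 := by simpa using hr
    subst this
    simp only [pow_zero, mul_one, add_zero, Finset.range_zero, Finset.sum_empty, mul_zero]
    rw [key, Nat.div_eq_of_lt ha]; simp
  | succ n ih =>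
    intro r hr
    have h1 : (a * p ^ (n + 1) + r) / p = a * p ^ n + r / p := by
      rw [pow_succ, ← mul_assoc, add_comm, Nat.add_mul_div_right _ _ hp0, add_comm]
    have h2 : r / p < p ^ n := by
      rw [Nat.div_lt_iff_lt_mul hp0, ← pow_succ]; exact hr
    rw [key, h1, ih _ h2, key r, Finset.sum_range_succ]
    ring

theorem aux_pow (p : ℕ) [hp : Fact p.Prime] (n : ℕ) :
    padicValNat p (p ^ n).factorial = ∑ i ∈ Finset.range n, p ^ i := by
  have := aux_val p 1 hp.out.one_lt n 0 (pow_pos hp.out.pos n)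
  simpa using this

theorem aux_mono (p : ℕ) [hp : Fact p.Prime] {a b : ℕ} (h : a ≤ b) :
    padicValNat p a.factorial ≤ padicValNat p b.factorial := by
  rw [← padicValNat_dvd_iff_le (Nat.factorial_ne_zero _)]
  exact pow_padicValNat_dvd.trans (Nat.factorial_dvd_factorial h)

theorem aux_pred (p : ℕ) [hp : Fact p.Prime] (n : ℕ) (hn : 0 < n) :
    padicValNat p (p ^ n - 1).factorial < ∑ i ∈ Finset.range n, p ^ i := by
  rw [← aux_pow p n]
  have h : (p ^ n).factorial = p ^ n * (p ^ n - 1).factorial :=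
    (Nat.mul_factorial_pred (pow_pos hp.out.pos n).ne').symm
  rw [h, padicValNat.mul (pow_pos hp.out.pos n).ne' (Nat.factorial_ne_zero _),
    padicValNat.prime_pow]
  omega

theorem aux_main (p : ℕ) [hp : Fact p.Prime] (l : ℕ) :
    ∀ (n t : Fin (l + 1) → ℕ), StrictAnti n → (∀ i, 0 < n i) →
    (∀ i : Fin (l + 1), i ≠ Fin.last l → 1 ≤ t i ∧ t i ≤ p - 1) →
    (1 ≤ t (Fin.last l) ∧ t (Fin.last l) ≤ p) →
    0 < ∑ i, t i * p ^ n i ∧ ∑ i, t i * p ^ n i ≤ p ^ (n 0 + 1) ∧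
    padicValNat p (∑ i, t i * p ^ n i - 1).factorial <
      ∑ i, t i * (∑ j ∈ Finset.range (n i), p ^ j) := by
  have hp0 : 0 < p := hp.out.pos
  induction l with
  | zero =>
    intro n t _ hn _ htl
    simp only [Nat.reduceAdd, Finset.univ_unique, Fin.default_eq_zero, Finset.sum_singleton]
    have h0 : Fin.last 0 = 0 := rfl
    rw [h0] at htl
    have hn0 := hn 0
    generalize n 0 = N at *
    generalize t 0 = T at *
    have hP : 0 < p ^ N := pow_pos hp0 N
    obtain ⟨S, rfl⟩ : ∃ S, T = S + 1 := ⟨T - 1, by omega⟩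
    refine ⟨by positivity, ?_, ?_⟩
    · rw [pow_succ, mul_comm]; exact Nat.mul_le_mul_left _ htl.2
    · have e : (S + 1) * p ^ N - 1 = S * p ^ N + (p ^ N - 1) := by
        rw [add_mul, one_mul]; omega
      rw [e, aux_val p S (by omega) N _ (by omega), add_mul, one_mul]
      have := aux_pred p N hn0
      omega
  | succ l ih =>
    intro n t ha hn ht htl
    obtain ⟨h1, h2, h3⟩ := ih (fun i => n i.succ) (fun i => t i.succ)
      (fun i j h => ha (Fin.succ_lt_succ_iff.2 h)) (fun i => hn _)
      (fun i hi => ht _ (by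
        rw [← Fin.succ_last]
        exact fun h => hi (Fin.succ_injective _ h)))
      (by simpa using htl)
    rw [Fin.sum_univ_succ (fun i => t i * p ^ n i),
      Fin.sum_univ_succ (fun i => t i * ∑ j ∈ Finset.range (n i), p ^ j)]
    have h01 : n (Fin.succ 0) < n 0 := ha (Fin.succ_pos 0)
    have ht0 := ht 0 (by simp [Fin.ext_iff])
    generalize (∑ i : Fin (l + 1), t i.succ * p ^ n i.succ) = Z at *
    generalize n 0 = N at *
    generalize t 0 = T at *
    have h4 : Z ≤ p ^ N := h2.trans (Nat.pow_le_pow_right hp0 h01)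
    refine ⟨Nat.add_pos_right _ h1, ?_, ?_⟩
    · calc T * p ^ N + Z ≤ T * p ^ N + p ^ N := by omega
        _ = (T + 1) * p ^ N := by ring
        _ ≤ p * p ^ N := Nat.mul_le_mul_right _ (by omega)
        _ = _ := by ring
    · rw [Nat.add_sub_assoc h1, aux_val p T (by omega) N _ (by omega)]
      exact Nat.add_lt_add_left h3 _

theorem smallest_factorial_multiple_of_prime_pow (p : ℕ) (hp : p.Prime) (l : ℕ)
    (n t : Fin (l + 1) → ℕ) (hanti : StrictAnti n) (hnpos : ∀ i, 0 < n i)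
    (ht : ∀ i : Fin (l + 1), i ≠ Fin.last l → 1 ≤ t i ∧ t i ≤ p - 1)
    (htl : 1 ≤ t (Fin.last l) ∧ t (Fin.last l) ≤ p) :
    p ^ (∑ i, t i * ((p ^ n i - 1) / (p - 1))) ∣
      Nat.factorial (∑ i, t i * p ^ n i) ∧
    ∀ m < ∑ i, t i * p ^ n i,
      ¬ p ^ (∑ i, t i * ((p ^ n i - 1) / (p - 1))) ∣ Nat.factorial m := by
  have : Fact p.Prime := ⟨hp⟩
  simp only [← Nat.geomSum_eq hp.two_le]
  constructor
  · rw [← Finset.prod_pow_eq_pow_sum]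
    refine dvd_trans (Finset.prod_dvd_prod_of_dvd _ _ fun i _ => ?_)
      (Nat.prod_factorial_dvd_factorial_sum Finset.univ (fun i => t i * p ^ n i))
    have h := Nat.prod_factorial_dvd_factorial_sum (Finset.range (t i)) (fun _ => p ^ n i)
    simp only [Finset.prod_const, Finset.sum_const, Finset.card_range, smul_eq_mul] at h
    refine dvd_trans ?_ h
    rw [mul_comm, pow_mul]
    apply pow_dvd_pow_of_dvd
    rw [← aux_pow p (n i)]
    exact pow_padicValNat_dvd
  · intro m hm hd
    rw [padicValNat_dvd_iff_le (Nat.factorial_ne_zero _)] at hd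
    have h := (aux_main p l n t hanti hnpos ht htl).2.2
    have h' := aux_mono p (Nat.le_sub_one_of_lt hm)
    omega
end

section
/- Let p be a prime and n ≥ 1 a natural number. Then the smallest natural number m such that p^((p^n - 1)/(p - 1)) divides m! is exactly p^n. -/
/-- The Smarandache function: the smallest `m` such that `n` divides `m!`. -/
noncomputable def S (n : ℕ) : ℕ := sInf {m : ℕ | n ∣ Nat.factorial m}

theorem S_aux (p : ℕ) [hp : Fact p.Prime] (n : ℕ) :
    (p - 1) * padicValNat p (p ^ n).factorial + 1 = p ^ n := by
  induction n with
  | zero => simp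
  | succ k ih =>
    rw [pow_succ', padicValNat_factorial_mul, mul_add]
    obtain ⟨q, hq⟩ : ∃ q, p = q + 1 := ⟨p - 1, by have := hp.out.pos; omega⟩
    have h1 : p - 1 = q := by omega
    rw [h1] at ih ⊢
    have h2 : p * p ^ k = q * p ^ k + p ^ k := by
      nth_rewrite 1 [hq]
      ring
    omega

theorem smarandache_prime_pow_repunit (p : ℕ) (hp : p.Prime) (n : ℕ) (hn : 1 ≤ n) :
    S (p ^ ((p ^ n - 1) / (p - 1))) = p ^ n := by
  have : Fact p.Prime := ⟨hp⟩
  have h := S_aux p n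
  have hp1 : 0 < p - 1 := by have := hp.two_le; omega
  have hR : (p ^ n - 1) / (p - 1) = padicValNat p (p ^ n).factorial := by
    rw [← h, Nat.add_sub_cancel, Nat.mul_div_cancel_left _ hp1, h]
  rw [hR]
  have hpn : 1 < p ^ n := Nat.one_lt_pow (by omega) hp.one_lt
  unfold S
  apply le_antisymm
  · exact Nat.sInf_le pow_padicValNat_dvd
  · refine le_csInf ⟨_, pow_padicValNat_dvd⟩ ?_
    intro m hm
    by_contra hlt
    have hle : padicValNat p (p ^ n).factorial ≤ padicValNat p m.factorial :=
      (padicValNat_dvd_iff_le (Nat.factorial_ne_zero m)).1 hm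
    have hmul := Nat.mul_le_mul_left (p - 1) hle
    rcases Nat.eq_zero_or_pos m with rfl | hm0
    · simp only [Nat.factorial_zero, padicValNat_one_right, mul_zero] at hmul
      omega
    · have := sub_one_mul_padicValNat_factorial_lt_of_ne_zero p hm0.ne'
      omega
end

section
/- Let a and b be positive integers that are coprime. Then S(a·b) = max(S(a), S(b)), where S(n) is the smallest natural number m with n ∣ m!. -/
theorem S_dvd (n : ℕ) (hn : 0 < n) : n ∣ Nat.factorial (S n) :=
  Nat.sInf_mem (s := {m : ℕ | n ∣ Nat.factorial m}) ⟨n, Nat.dvd_factorial hn le_rfl⟩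

theorem S_le {n m : ℕ} (h : n ∣ Nat.factorial m) : S n ≤ m :=
  Nat.sInf_le (s := {m : ℕ | n ∣ Nat.factorial m}) h

theorem smarandache_mul_coprime (a b : ℕ) (ha : 0 < a) (hb : 0 < b)
    (hab : Nat.Coprime a b) : S (a * b) = max (S a) (S b) := by
  apply le_antisymm
  · apply S_le
    exact hab.mul_dvd_of_dvd_of_dvd
      ((S_dvd a ha).trans (Nat.factorial_dvd_factorial (le_max_left _ _)))
      ((S_dvd b hb).trans (Nat.factorial_dvd_factorial (le_max_right _ _)))
  · have h := S_dvd (a * b) (Nat.mul_pos ha hb)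
    exact max_le (S_le ((dvd_mul_right a b).trans h)) (S_le ((dvd_mul_left b a).trans h))
end

section
/- Let n be a natural number with n > 4. Then S(n) = n if and only if n is prime, where S(n) is the smallest natural number m with n ∣ m!. -/
theorem smarandache_eq_self_iff_prime (n : ℕ) (hn : 4 < n) :
    S n = n ↔ n.Prime := by
  have hmem : n ∣ Nat.factorial (S n) :=
    Nat.sInf_mem (s := {m : ℕ | n ∣ Nat.factorial m})
      ⟨n, Nat.dvd_factorial (by omega) le_rfl⟩
  have hle : ∀ m, n ∣ Nat.factorial m → S n ≤ m := fun m hm => Nat.sInf_le hm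
  constructor
  · intro h
    by_contra hp
    obtain ⟨a, ⟨b, hb⟩, ha2, han⟩ := Nat.exists_dvd_of_not_prime2 (by omega) hp
    have hb2 : 2 ≤ b := by
      by_contra hlt
      have : b ≤ 1 := by omega
      nlinarith
    have hd : n ∣ Nat.factorial (a + b) := by
      rw [hb]
      exact (mul_dvd_mul (Nat.dvd_factorial (by omega) le_rfl)
        (Nat.dvd_factorial (by omega) le_rfl)).trans
        (Nat.factorial_mul_factorial_dvd_factorial_add a b)
    have h1 := hle _ hd
    obtain ⟨c, rfl⟩ := Nat.exists_eq_add_of_le ha2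
    obtain ⟨d, rfl⟩ := Nat.exists_eq_add_of_le hb2
    have h2 : n = 4 + 2 * c + 2 * d + c * d := by rw [hb]; ring
    have h3 : c = 0 ∧ d = 0 := by
      constructor <;> nlinarith [Nat.zero_le (c * d)]
    obtain ⟨rfl, rfl⟩ := h3
    omega
  · intro hp
    exact le_antisymm (hle n (Nat.dvd_factorial (by omega) le_rfl))
      ((hp.dvd_factorial).1 hmem)
end
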